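/- arXiv:1009.1689 — 9 statements merged into one kernel-verified Lean document; each statement's English description precedes it below -/
import Mathlib

section
/- Let 0 ≤ ϑ₁ < ϑ₂ < ∞ and set ϑ = ϑ₂ − ϑ₁. For every kernel g ∈ K(I_{ϑ₁,ϑ₂}) there exist a finite family of complex numbers λ₁,…,λ_N, natural numbers k, and complex coefficients a_{ik} (finitely many nonzero) such that for all t ∈ ℝ, g(t) = Σ_{i,k} a_{ik} · θ_{λ_i}^k(t − ϑ₁). In other words, every distributed-delay kernel is a finite linear combination of time-shifted elementary distributed-delay kernels and their polynomial-weighted variants. -/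
open Complex

/-- The kernel `θ_λ^k`: `(-t)^k * exp(λ t)` on `[0, ϑ]` and `0` elsewhere. -/
noncomputable def thetaK (lam : ℂ) (ϑ : ℝ) (k : ℕ) (t : ℝ) : ℂ :=
  if t ∈ Set.Icc (0 : ℝ) ϑ then (-(t : ℂ)) ^ k * Complex.exp (lam * t) else 0

/-- Every distributed-delay kernel `g ∈ K(I_{ϑ₁,ϑ₂})` is a finite linear combination of
time-shifted elementary distributed-delay kernels and their polynomial-weighted variants. -/
theorem stmt0 (ϑ₁ ϑ₂ : ℝ) (hϑ₁ : 0 ≤ ϑ₁) (hϑ : ϑ₁ < ϑ₂)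
    (g : ℝ → ℂ) (N : ℕ) (c lam : Fin N → ℂ) (j : Fin N → ℕ)
    (hg_supp : ∀ t : ℝ, t ∉ Set.Icc ϑ₁ ϑ₂ → g t = 0)
    (hg : ∀ t ∈ Set.Icc ϑ₁ ϑ₂,
      g t = ∑ i, c i * (t : ℂ) ^ (j i) * Complex.exp (lam i * t)) :
    ∃ (M : ℕ) (a μ : Fin M → ℂ) (k : Fin M → ℕ),
      ∀ t : ℝ, g t = ∑ i, a i * thetaK (μ i) (ϑ₂ - ϑ₁) (k i) (t - ϑ₁) := by
  classical
  let e := (Fintype.equivFin (Σ i : Fin N, Fin (j i + 1))).symm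
  refine ⟨Fintype.card (Σ i : Fin N, Fin (j i + 1)),
    fun x => c (e x).1 * Complex.exp (lam (e x).1 * ϑ₁) * (-1) ^ ((e x).2 : ℕ) *
      (ϑ₁ : ℂ) ^ (j (e x).1 - ((e x).2 : ℕ)) * ((j (e x).1).choose ((e x).2 : ℕ) : ℂ),
    fun x => lam (e x).1, fun x => ((e x).2 : ℕ), ?_⟩
  intro t
  rw [Equiv.sum_comp e (fun y : (Σ i : Fin N, Fin (j i + 1)) =>
    c y.1 * Complex.exp (lam y.1 * ϑ₁) * (-1) ^ (y.2 : ℕ) *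
      (ϑ₁ : ℂ) ^ (j y.1 - (y.2 : ℕ)) * ((j y.1).choose (y.2 : ℕ) : ℂ) *
      thetaK (lam y.1) (ϑ₂ - ϑ₁) (y.2 : ℕ) (t - ϑ₁))]
  by_cases ht : t ∈ Set.Icc ϑ₁ ϑ₂
  · have ht' : t - ϑ₁ ∈ Set.Icc (0 : ℝ) (ϑ₂ - ϑ₁) :=
      ⟨by linarith [ht.1], by linarith [ht.2]⟩
    rw [hg t ht, Fintype.sum_sigma]
    refine Finset.sum_congr rfl fun i _ => ?_
    simp only [thetaK, if_pos ht']
    have h1 : (t : ℂ) ^ (j i) = ∑ m : Fin (j i + 1),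
        ((t - ϑ₁ : ℝ) : ℂ) ^ (m : ℕ) * (ϑ₁ : ℂ) ^ (j i - (m : ℕ)) *
          ((j i).choose (m : ℕ) : ℂ) := by
      rw [Fin.sum_univ_eq_sum_range (fun m => ((t - ϑ₁ : ℝ) : ℂ) ^ m *
        (ϑ₁ : ℂ) ^ (j i - m) * ((j i).choose m : ℂ)), ← add_pow]
      push_cast
      ring
    have h2 : Complex.exp (lam i * t) =
        Complex.exp (lam i * ϑ₁) * Complex.exp (lam i * ((t - ϑ₁ : ℝ) : ℂ)) := by
      rw [← Complex.exp_add]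
      congr 1
      push_cast
      ring
    rw [h1, h2, Finset.mul_sum, Finset.sum_mul]
    refine Finset.sum_congr rfl fun m _ => ?_
    have h3 : ((t - ϑ₁ : ℝ) : ℂ) ^ (m : ℕ) =
        (-1) ^ (m : ℕ) * (-((t - ϑ₁ : ℝ) : ℂ)) ^ (m : ℕ) := by
      rw [← mul_pow]
      simp
    rw [h3]
    ring
  · have ht' : t - ϑ₁ ∉ Set.Icc (0 : ℝ) (ϑ₂ - ϑ₁) := fun h =>
      ht ⟨by linarith [h.1], by linarith [h.2]⟩
    rw [hg_supp t ht]
    simp only [thetaK, if_neg ht', mul_zero, Finset.sum_const_zero]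
end

section
/- For every integrable function f : ℝ → ℂ vanishing on (−∞, 0) and every ε > 0, there exist finitely many coefficients c_{ij} ∈ ℂ and exponents λ_i ∈ ℂ with Re λ_i < 0 such that ∫₀^∞ |f(t) − Σ_{i,j} c_{ij} t^j exp(λ_i t)| dt ≤ ε. That is, the lumped-system kernels (finite linear combinations of t^j exp(λ t) with Re λ < 0 on [0, ∞)) are dense in L¹(ℝ₊). -/
open Complex MeasureTheory

/-- The substitution `x = exp (-t)` turns a compactly supported function into a continuous one. -/
lemma aux_cont (g : ℝ → ℂ) (hg : Continuous g) (hs : HasCompactSupport g) :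
    Continuous (fun x : ℝ => g (-Real.log x) / (x : ℂ)) := by
  obtain ⟨R, hR⟩ : ∃ R : ℝ, ∀ t, R < t → g t = 0 := by
    obtain ⟨R, hR⟩ := hs.isCompact.isBounded.bddAbove
    refine ⟨R, fun t ht => ?_⟩
    by_contra h
    exact absurd (hR (subset_tsupport g h)) (not_le.mpr ht)
  rw [continuous_iff_continuousAt]
  intro x
  by_cases hx : x = 0
  · subst hx
    have : (fun x : ℝ => g (-Real.log x) / (x : ℂ)) =ᶠ[nhds 0] fun _ => (0:ℂ) := by
      filter_upwards [Metric.ball_mem_nhds (0:ℝ) (Real.exp_pos (-R))] with y hy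
      by_cases hy0 : y = 0
      · simp [hy0]
      · rw [hR, zero_div]
        have h1 : |y| < Real.exp (-R) := by simpa using hy
        have h2 := (Real.log_lt_iff_lt_exp (abs_pos.mpr hy0)).2 h1
        rw [Real.log_abs] at h2
        linarith
    exact continuousAt_const.congr this.symm
  · refine ContinuousAt.div ?_ (by fun_prop) (by exact_mod_cast hx)
    exact hg.continuousAt.comp (Real.continuousAt_log hx).neg

lemma aux_poly (h : ℝ → ℂ) (hh : Continuous h) (ε : ℝ) (hε : 0 < ε) :
    ∃ p : Polynomial ℂ, ∀ x ∈ Set.Icc (0:ℝ) 1, ‖h x - p.eval (x:ℂ)‖ ≤ ε := by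
  obtain ⟨p, hp⟩ := exists_polynomial_near_of_continuousOn 0 1 (fun x => (h x).re)
    (Complex.continuous_re.comp hh).continuousOn (ε/2) (by positivity)
  obtain ⟨q, hq⟩ := exists_polynomial_near_of_continuousOn 0 1 (fun x => (h x).im)
    (Complex.continuous_im.comp hh).continuousOn (ε/2) (by positivity)
  refine ⟨p.map Complex.ofRealHom + Polynomial.C I * q.map Complex.ofRealHom, fun x hx => ?_⟩
  have e1 : ∀ r : Polynomial ℝ, (r.map Complex.ofRealHom).eval (x:ℂ) = ((r.eval x : ℝ) : ℂ) :=
    fun r => Polynomial.eval_map_apply (f := Complex.ofRealHom) (p := r) x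
  simp only [Polynomial.eval_add, Polynomial.eval_mul, Polynomial.eval_C, e1]
  refine (Complex.norm_le_abs_re_add_abs_im _).trans ?_
  have a := hp x hx
  have b := hq x hx
  rw [abs_sub_comm] at a b
  simp
  linarith

/-- Lumped-system kernels (finite linear combinations of `t^j exp(λ t)` with `Re λ < 0`)
are dense in `L¹(ℝ₊)`. -/
theorem stmt4 (f : ℝ → ℂ) (hf : Integrable f)
    (hf0 : ∀ t : ℝ, t < 0 → f t = 0) (ε : ℝ) (hε : 0 < ε) :
    ∃ (N : ℕ) (c lam : Fin N → ℂ) (j : Fin N → ℕ),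
      (∀ i, (lam i).re < 0) ∧
      (∫ t in Set.Ioi (0:ℝ),
        ‖f t - ∑ i, c i * (t : ℂ) ^ (j i) * Complex.exp (lam i * t)‖) ≤ ε := by
  obtain ⟨g, hs, hfg, hg, hgi⟩ :=
    hf.exists_hasCompactSupport_integral_sub_le (ε := ε/2) (by positivity)
  obtain ⟨p, hp⟩ := aux_poly _ (aux_cont g hg hs) (ε/2) (by positivity)
  refine ⟨p.natDegree + 1, fun i => p.coeff i, fun i => -((i:ℕ) + 1 : ℂ), fun _ => 0, ?_, ?_⟩
  · intro i
    have : (0:ℝ) ≤ ((i:ℕ):ℝ) := Nat.cast_nonneg _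
    simp
    linarith
  have key : ∀ t : ℝ, (∑ i : Fin (p.natDegree + 1), p.coeff i * (t : ℂ) ^ 0 *
      Complex.exp (-((i:ℕ) + 1 : ℂ) * t)) =
      ((Real.exp (-t) : ℝ) : ℂ) * p.eval ((Real.exp (-t) : ℝ) : ℂ) := by
    intro t
    rw [Fin.sum_univ_eq_sum_range (fun i : ℕ => p.coeff i * (t : ℂ) ^ 0 *
      Complex.exp (-((i:ℕ) + 1 : ℂ) * t)), Polynomial.eval_eq_sum_range, Finset.mul_sum]
    refine Finset.sum_congr rfl fun i _ => ?_
    have : Complex.exp (-((i:ℕ) + 1 : ℂ) * t) =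
        Complex.exp (-t) * Complex.exp (-t) ^ i := by
      rw [← Complex.exp_nat_mul, ← Complex.exp_add]
      congr 1
      ring
    rw [this]
    push_cast
    ring
  simp only [key]
  have hi1 : IntegrableOn (fun t => ‖f t - g t‖) (Set.Ioi (0:ℝ)) :=
    (hf.sub hgi).norm.integrableOn
  have hi2 : IntegrableOn (fun t => ε/2 * Real.exp (-t)) (Set.Ioi (0:ℝ)) :=
    (integrableOn_exp_neg_Ioi 0).const_mul _
  calc _ ≤ ∫ t in Set.Ioi (0:ℝ), (‖f t - g t‖ + ε/2 * Real.exp (-t)) := by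
        refine integral_mono_of_nonneg (Filter.Eventually.of_forall fun t => norm_nonneg _)
          (hi1.add hi2) ?_
        filter_upwards [ae_restrict_mem measurableSet_Ioi] with t ht
        have ht' : (0:ℝ) < t := ht
        have h1 := hp (Real.exp (-t)) ⟨(Real.exp_pos _).le, Real.exp_le_one_iff.2 (by linarith)⟩
        simp only [Real.log_exp, neg_neg] at h1
        have hne : ((Real.exp (-t) : ℝ) : ℂ) ≠ 0 := by exact_mod_cast (Real.exp_pos _).ne'
        have h2 : f t - ((Real.exp (-t) : ℝ) : ℂ) * p.eval ((Real.exp (-t) : ℝ) : ℂ) =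
            (f t - g t) + ((Real.exp (-t) : ℝ) : ℂ) *
              (g t / ((Real.exp (-t) : ℝ) : ℂ) - p.eval ((Real.exp (-t) : ℝ) : ℂ)) := by
          rw [mul_sub, mul_div_cancel₀ _ hne]
          ring
        simp only [h2]
        refine (norm_add_le _ _).trans ?_
        rw [norm_mul, Complex.norm_real, Real.norm_of_nonneg (Real.exp_pos _).le,
          mul_comm (ε/2)]
        gcongr
    _ = (∫ t in Set.Ioi (0:ℝ), ‖f t - g t‖) + ε/2 := by
        rw [integral_add hi1 hi2, integral_const_mul, integral_exp_neg_Ioi_zero, mul_one]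
    _ ≤ (∫ t, ‖f t - g t‖) + ε/2 := by
        refine add_le_add ?_ le_rfl
        exact setIntegral_le_integral (hf.sub hgi).norm
          (Filter.Eventually.of_forall fun t => norm_nonneg _)
    _ ≤ ε := by linarith
end

section
/- Let 0 ≤ ϑ₁ < ϑ₂ < ∞ and let g ∈ K(I_{ϑ₁,ϑ₂}) be a distributed-delay kernel. Then for every ε > 0 there exist finitely many coefficients c_{ij} ∈ ℂ and exponents λ_i ∈ ℂ with Re λ_i < 0 such that ∫₀^∞ |g(t) − Σ_{i,j} c_{ij} t^j exp(λ_i t)| dt ≤ ε; i.e., every distributed delay can be approximated in L¹-norm (equivalently, in the graph topology) by a lumped-system kernel. -/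
open Complex MeasureTheory

lemma aux_poly_s5 (k : ℝ → ℝ) (hk : Continuous k) (T : ℝ) (hT : ∀ t, T ≤ t → k t = 0)
    (δ : ℝ) (hδ : 0 < δ) :
    ∃ p : Polynomial ℝ, ∀ t : ℝ, 0 < t →
      |k t - p.eval (Real.exp (-t)) * Real.exp (-t)| ≤ δ * Real.exp (-t) := by
  obtain ⟨p, hp⟩ := exists_polynomial_near_of_continuousOn 0 1
    (fun x => k (-Real.log (max x (Real.exp (-T)))) *
      Real.exp (-Real.log (max x (Real.exp (-T))))) (by
      have h0 : Continuous fun x : ℝ => Real.log (max x (Real.exp (-T))) := by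
        refine Continuous.log (by fun_prop) (fun x => ?_)
        have := Real.exp_pos (-T)
        exact (lt_of_lt_of_le this (le_max_right _ _)).ne'
      fun_prop) δ hδ
  refine ⟨p, fun t ht => ?_⟩
  have h1 := hp (Real.exp (-t)) ⟨(Real.exp_pos _).le, by simpa using ht.le⟩
  have h2 : k (-Real.log (max (Real.exp (-t)) (Real.exp (-T)))) *
      Real.exp (-Real.log (max (Real.exp (-t)) (Real.exp (-T)))) = k t * Real.exp t := by
    rcases le_total t T with h | h
    · rw [max_eq_left (by simpa using h)]; simp
    · rw [max_eq_right (by simpa using h)]; simp [hT t h, hT T le_rfl]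
  simp only [h2] at h1
  have h3 : k t - p.eval (Real.exp (-t)) * Real.exp (-t)
      = - ((p.eval (Real.exp (-t)) - k t * Real.exp t) * Real.exp (-t)) := by
    have : Real.exp t * Real.exp (-t) = 1 := by rw [← Real.exp_add]; simp
    linear_combination (-k t) * this
  rw [h3, abs_neg, abs_mul, abs_of_pos (Real.exp_pos (-t))]
  exact mul_le_mul_of_nonneg_right h1.le (Real.exp_pos _).le

/-- Every distributed-delay kernel `g ∈ K(I_{ϑ₁,ϑ₂})` can be approximated in `L¹`-norm
(equivalently, in the graph topology) by a lumped-system kernel, i.e. by a finite linear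
combination of `t^j exp(λ t)` with `Re λ < 0`. -/
theorem stmt5 (ϑ₁ ϑ₂ : ℝ) (hϑ₁ : 0 ≤ ϑ₁) (hϑ : ϑ₁ < ϑ₂)
    (g : ℝ → ℂ) (N : ℕ) (c lam : Fin N → ℂ) (j : Fin N → ℕ)
    (hg_supp : ∀ t : ℝ, t ∉ Set.Icc ϑ₁ ϑ₂ → g t = 0)
    (hg : ∀ t ∈ Set.Icc ϑ₁ ϑ₂,
      g t = ∑ i, c i * (t : ℂ) ^ (j i) * Complex.exp (lam i * t))
    (ε : ℝ) (hε : 0 < ε) :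
    ∃ (M : ℕ) (c' lam' : Fin M → ℂ) (j' : Fin M → ℕ),
      (∀ i, (lam' i).re < 0) ∧
      (∫ t in Set.Ioi (0:ℝ),
        ‖g t - ∑ i, c' i * (t : ℂ) ^ (j' i) * Complex.exp (lam' i * t)‖) ≤ ε := by
  have hgi : Integrable g := by
    have h1 : g = (Set.Icc ϑ₁ ϑ₂).indicator
        (fun t : ℝ => ∑ i, c i * (t : ℂ) ^ (j i) * Complex.exp (lam i * t)) := by
      funext t
      by_cases ht : t ∈ Set.Icc ϑ₁ ϑ₂
      · rw [Set.indicator_of_mem ht, hg t ht]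
      · rw [Set.indicator_of_notMem ht, hg_supp t ht]
    rw [h1, integrable_indicator_iff measurableSet_Icc]
    exact (Continuous.continuousOn (by fun_prop)).integrableOn_compact isCompact_Icc
  obtain ⟨k, hks, hkε, hkc, hki⟩ :=
    hgi.exists_hasCompactSupport_integral_sub_le (ε := ε / 2) (by positivity)
  obtain ⟨T, hT⟩ : ∃ T : ℝ, ∀ t, T ≤ t → k t = 0 := by
    obtain ⟨B, hB⟩ := hks.isCompact.bddAbove
    refine ⟨B + 1, fun t ht => ?_⟩
    by_contra h
    have := hB (subset_tsupport k h)
    linarith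
  obtain ⟨p, hp⟩ := aux_poly_s5 (fun t => (k t).re) (by fun_prop) T
    (fun t ht => by simp [hT t ht]) (ε / 4) (by positivity)
  obtain ⟨q, hq⟩ := aux_poly_s5 (fun t => (k t).im) (by fun_prop) T
    (fun t ht => by simp [hT t ht]) (ε / 4) (by positivity)
  set M := max p.natDegree q.natDegree + 1 with hM
  refine ⟨M, fun i => (p.coeff i : ℂ) + (q.coeff i : ℂ) * I, fun i => -((i : ℕ) + 1 : ℂ),
    fun _ => 0, fun i => ?_, ?_⟩
  · have : (0:ℝ) ≤ (i : ℕ) := Nat.cast_nonneg _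
    simp
    linarith
  set S : ℝ → ℂ := fun t => ∑ i : Fin M, ((p.coeff i : ℂ) + (q.coeff i : ℂ) * I) * (t : ℂ) ^ 0 *
    Complex.exp (-((i : ℕ) + 1 : ℂ) * t) with hS
  have hSeq : ∀ t : ℝ, S t = ((p.eval (Real.exp (-t)) * Real.exp (-t) : ℝ) : ℂ) +
      ((q.eval (Real.exp (-t)) * Real.exp (-t) : ℝ) : ℂ) * I := by
    intro t
    have hp' := Polynomial.eval_eq_sum_range' (p := p) (n := M) (by omega) (Real.exp (-t))
    have hq' := Polynomial.eval_eq_sum_range' (p := q) (n := M) (by omega) (Real.exp (-t))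
    rw [hp', hq', ← Fin.sum_univ_eq_sum_range (fun i => p.coeff i * Real.exp (-t) ^ i),
      ← Fin.sum_univ_eq_sum_range (fun i => q.coeff i * Real.exp (-t) ^ i)]
    push_cast
    rw [Finset.sum_mul, Finset.sum_mul, Finset.sum_mul, ← Finset.sum_add_distrib]
    refine Finset.sum_congr rfl fun i _ => ?_
    have : Complex.exp (-((i : ℕ) + 1 : ℂ) * t) = Complex.exp (-t) ^ (i : ℕ) * Complex.exp (-t) := by
      rw [← Complex.exp_nat_mul, ← Complex.exp_add]; congr 1; ring
    rw [this]; ring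
  have hbound : ∀ t : ℝ, 0 < t → ‖k t - S t‖ ≤ ε / 2 * Real.exp (-t) := by
    intro t ht
    refine (Complex.norm_le_abs_re_add_abs_im _).trans ?_
    have h1 := hp t ht
    have h2 := hq t ht
    have e1 : (k t - S t).re = (k t).re - p.eval (Real.exp (-t)) * Real.exp (-t) := by
      rw [hSeq, sub_re, add_re, re_ofReal_mul, ofReal_re]; simp
    have e2 : (k t - S t).im = (k t).im - q.eval (Real.exp (-t)) * Real.exp (-t) := by
      rw [hSeq, sub_im, add_im, im_ofReal_mul, ofReal_im]; simp
    rw [e1, e2]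
    linarith
  have hexp : IntegrableOn (fun t : ℝ => ε / 2 * Real.exp (-t)) (Set.Ioi 0) :=
    (integrableOn_exp_neg_Ioi 0).const_mul _
  have hgk : Integrable (fun t => ‖g t - k t‖) := (hgi.sub hki).norm
  have hle : ∫ t in Set.Ioi (0:ℝ), ‖g t - S t‖ ≤
      ∫ t in Set.Ioi (0:ℝ), (‖g t - k t‖ + ε / 2 * Real.exp (-t)) := by
    refine integral_mono_of_nonneg (Filter.Eventually.of_forall fun t => norm_nonneg _)
      (hgk.integrableOn.add hexp) ?_
    refine (ae_restrict_iff' measurableSet_Ioi).2 (Filter.Eventually.of_forall fun t ht => ?_)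
    have := hbound t ht
    have := norm_sub_le_norm_sub_add_norm_sub (g t) (k t) (S t)
    show ‖g t - S t‖ ≤ ‖g t - k t‖ + ε / 2 * Real.exp (-t)
    linarith
  refine hle.trans ?_
  rw [integral_add hgk.integrableOn hexp, integral_const_mul, integral_exp_neg_Ioi]
  have h5 : ∫ t in Set.Ioi (0:ℝ), ‖g t - k t‖ ≤ ∫ t, ‖g t - k t‖ :=
    setIntegral_le_integral hgk (Filter.Eventually.of_forall fun t => norm_nonneg _)
  simp
  linarith
end

section
/- Let λ ∈ ℂ with Re λ ≥ 0 and ϑ > 0. For every ε > 0 there exist n ∈ ℕ, coefficients γ₁, …, γ_n ∈ ℂ and exponents α₁, …, α_n ∈ ℂ with Re α_i < 0 such that ∫₀^ϑ |exp(λ t) − Σ_{i=1}^n γ_i exp(α_i t)| dt ≤ ε. Equivalently, the elementary distributed-delay kernel θ_λ with unstable exponent can be approximated in L¹-norm (i.e., in the graph topology) by distributed-delay kernels whose exponents all have negative real part. -/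
open Complex intervalIntegral

/-- The elementary distributed-delay kernel `θ_λ` with unstable exponent (`Re λ ≥ 0`)
can be approximated in `L¹`-norm (graph topology) by distributed-delay kernels whose
exponents all have negative real part. -/
theorem stmt7 (lam : ℂ) (hlam : 0 ≤ lam.re) (ϑ : ℝ) (hϑ : 0 < ϑ)
    (ε : ℝ) (hε : 0 < ε) :
    ∃ (n : ℕ) (γ α : Fin n → ℂ),
      (∀ i, (α i).re < 0) ∧
      (∫ t in (0:ℝ)..ϑ,
        ‖Complex.exp (lam * t) - ∑ i, γ i * Complex.exp (α i * t)‖) ≤ ε := by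
  set f : ℝ → ℂ := fun x => Complex.exp (-(lam + 1) * (Real.log x : ℝ)) with hf
  have hfc : ContinuousOn f (Set.Icc (Real.exp (-ϑ)) 1) := by
    have hl : ContinuousOn Real.log (Set.Icc (Real.exp (-ϑ)) 1) :=
      Real.continuousOn_log.mono (fun x hx => ne_of_gt ((Real.exp_pos (-ϑ)).trans_le hx.1))
    exact Complex.continuous_exp.comp_continuousOn
      (continuousOn_const.mul (Complex.continuous_ofReal.comp_continuousOn hl))
  have hδ : 0 < ε / (2 * ϑ) := by positivity
  obtain ⟨p, hp⟩ := exists_polynomial_near_of_continuousOn _ _ (fun x => (f x).re)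
    (Complex.continuous_re.comp_continuousOn hfc) _ hδ
  obtain ⟨q, hq⟩ := exists_polynomial_near_of_continuousOn _ _ (fun x => (f x).im)
    (Complex.continuous_im.comp_continuousOn hfc) _ hδ
  set P : Polynomial ℂ := p.map Complex.ofRealHom + Polynomial.C I * q.map Complex.ofRealHom
    with hP
  have hPe : ∀ x : ℝ, P.eval (x : ℂ) = (p.eval x : ℝ) + I * (q.eval x : ℝ) := by
    intro x
    have h : ∀ r : Polynomial ℝ, (r.map Complex.ofRealHom).eval (x : ℂ) = (r.eval x : ℝ) :=
      fun r => Polynomial.eval_map_apply (f := Complex.ofRealHom) (p := r) x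
    simp [hP, h]
  refine ⟨P.natDegree + 1, fun i => P.coeff i, fun i => -((i : ℕ) + 1 : ℂ), ?_, ?_⟩
  · intro i
    have h : (0:ℝ) ≤ ((i : ℕ) : ℝ) := Nat.cast_nonneg _
    simp only [Complex.neg_re, Complex.add_re, Complex.natCast_re, Complex.one_re]
    linarith
  have key : ∀ t ∈ Set.uIoc (0:ℝ) ϑ, ‖‖Complex.exp (lam * t) - ∑ i : Fin (P.natDegree + 1),
      P.coeff i * Complex.exp (-((i : ℕ) + 1 : ℂ) * t)‖‖ ≤ ε / ϑ := by
    intro t ht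
    rw [Set.uIoc_of_le hϑ.le] at ht
    rw [norm_norm]
    have hx : Real.exp (-t) ∈ Set.Icc (Real.exp (-ϑ)) 1 :=
      ⟨Real.exp_le_exp.2 (by linarith [ht.2]), Real.exp_le_one_iff.2 (by linarith [ht.1])⟩
    have hs : ∑ i : Fin (P.natDegree + 1), P.coeff i * Complex.exp (-((i : ℕ) + 1 : ℂ) * t)
        = (Real.exp (-t) : ℂ) * P.eval (Real.exp (-t) : ℂ) := by
      rw [Polynomial.eval_eq_sum_range, Finset.mul_sum,
        Fin.sum_univ_eq_sum_range (fun i : ℕ => P.coeff i * Complex.exp (-((i : ℕ) + 1 : ℂ) * t))]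
      refine Finset.sum_congr rfl fun i _ => ?_
      rw [Complex.ofReal_exp, ← Complex.exp_nat_mul, mul_left_comm, ← Complex.exp_add]
      congr 2
      push_cast
      ring
    have he : Complex.exp (lam * t) = (Real.exp (-t) : ℂ) * f (Real.exp (-t)) := by
      simp only [hf, Real.log_exp]
      rw [Complex.ofReal_exp, ← Complex.exp_add]
      congr 1
      push_cast
      ring
    rw [hs, he, ← mul_sub, norm_mul, Complex.norm_real, Real.norm_of_nonneg (Real.exp_pos _).le]
    have h1 := hp _ hx
    have h2 := hq _ hx
    have h3 := Complex.norm_le_abs_re_add_abs_im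
      (f (Real.exp (-t)) - P.eval (Real.exp (-t) : ℂ))
    rw [hPe] at h3 ⊢
    simp only [Complex.sub_re, Complex.sub_im, Complex.add_re, Complex.add_im, Complex.mul_re,
      Complex.mul_im, Complex.ofReal_re, Complex.ofReal_im, Complex.I_re, Complex.I_im] at h3
    ring_nf at h3
    rw [abs_sub_comm] at h1 h2
    have h4 : ε / ϑ = ε / (2 * ϑ) + ε / (2 * ϑ) := by field_simp; norm_num
    refine (mul_le_of_le_one_left (norm_nonneg _) hx.2).trans ?_
    rw [h4]
    ring_nf at h1 h2 h3 ⊢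
    linarith
  have := intervalIntegral.norm_integral_le_of_norm_le_const key
  refine (Real.le_norm_self _).trans (this.trans ?_)
  rw [sub_zero, abs_of_pos hϑ]
  exact (div_mul_cancel₀ _ hϑ.ne').le
end

section
/- Let 0 ≤ ϑ₁ < ϑ₂ < ∞. For every f ∈ K(I_{ϑ₁,ϑ₂}) and every ε > 0 there exists f_app ∈ K_s(I_{ϑ₁,ϑ₂}) such that ∫_ℝ |f(t) − f_app(t)| dt ≤ ε. That is, K_s(I_{ϑ₁,ϑ₂}) is dense in K(I_{ϑ₁,ϑ₂}) for the L¹-norm (equivalently, for the graph topology). -/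
open Complex MeasureTheory

/-- `K_s(I_{ϑ₁,ϑ₂})` is dense in `K(I_{ϑ₁,ϑ₂})` for the `L¹`-norm (graph topology):
every distributed-delay kernel can be `L¹`-approximated by one whose exponents all have
negative real part. -/
theorem stmt10 (ϑ₁ ϑ₂ : ℝ) (hϑ₁ : 0 ≤ ϑ₁) (hϑ : ϑ₁ < ϑ₂)
    (f : ℝ → ℂ) (N : ℕ) (c lam : Fin N → ℂ) (j : Fin N → ℕ)
    (hf_supp : ∀ t : ℝ, t ∉ Set.Icc ϑ₁ ϑ₂ → f t = 0)
    (hf : ∀ t ∈ Set.Icc ϑ₁ ϑ₂,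
      f t = ∑ i, c i * (t : ℂ) ^ (j i) * Complex.exp (lam i * t))
    (ε : ℝ) (hε : 0 < ε) :
    ∃ (fapp : ℝ → ℂ) (M : ℕ) (c' lam' : Fin M → ℂ) (j' : Fin M → ℕ),
      (∀ i, (lam' i).re < 0) ∧
      (∀ t : ℝ, t ∉ Set.Icc ϑ₁ ϑ₂ → fapp t = 0) ∧
      (∀ t ∈ Set.Icc ϑ₁ ϑ₂,
        fapp t = ∑ i, c' i * (t : ℂ) ^ (j' i) * Complex.exp (lam' i * t)) ∧
      (∫ t : ℝ, ‖f t - fapp t‖) ≤ ε := by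
  have hL : 0 < ϑ₂ - ϑ₁ := sub_pos.mpr hϑ
  obtain ⟨δ, hδ, hδε⟩ : ∃ δ : ℝ, 0 < δ ∧ (δ + δ) * (ϑ₂ - ϑ₁) = ε :=
    ⟨ε / (2 * (ϑ₂ - ϑ₁)), by positivity, by field_simp; norm_num⟩
  let g : ℝ → ℂ := fun t =>
    (∑ i, c i * (t : ℂ) ^ (j i) * Complex.exp (lam i * t)) * Complex.exp t
  have hg : Continuous g := by fun_prop
  obtain ⟨p, hp⟩ := exists_polynomial_near_of_continuousOn ϑ₁ ϑ₂ (fun t => (g t).re)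
    (Complex.continuous_re.comp hg).continuousOn δ hδ
  obtain ⟨q, hq⟩ := exists_polynomial_near_of_continuousOn ϑ₁ ϑ₂ (fun t => (g t).im)
    (Complex.continuous_im.comp hg).continuousOn δ hδ
  let P : Polynomial ℂ := p.map Complex.ofRealHom + Polynomial.C Complex.I * q.map Complex.ofRealHom
  have hP : ∀ t : ℝ, P.eval (t : ℂ) = (p.eval t : ℝ) + Complex.I * (q.eval t : ℝ) := by
    intro t
    have h : ∀ r : Polynomial ℝ, (r.map Complex.ofRealHom).eval (t : ℂ) = ((r.eval t : ℝ) : ℂ) := by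
      intro r
      exact Polynomial.eval_map_apply (f := Complex.ofRealHom) (p := r) t
    simp only [P, Polynomial.eval_add, Polynomial.eval_mul, Polynomial.eval_C, h]
  have hnear : ∀ t ∈ Set.Icc ϑ₁ ϑ₂, ‖g t - P.eval (t : ℂ)‖ ≤ δ + δ := by
    intro t ht
    refine (Complex.norm_le_abs_re_add_abs_im _).trans (add_le_add ?_ ?_)
    · have := (hp t ht).le
      rw [abs_sub_comm] at this
      simpa [hP] using this
    · have := (hq t ht).le
      rw [abs_sub_comm] at this
      simpa [hP] using this
  refine ⟨(Set.Icc ϑ₁ ϑ₂).indicator (fun t => P.eval (t : ℂ) * Complex.exp (-t)),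
    P.natDegree + 1, fun i => P.coeff i, fun _ => -1, fun i => i, ?_, ?_, ?_, ?_⟩
  · intro i; simp
  · intro t ht; simp [Set.indicator_of_notMem ht]
  · intro t ht
    rw [Set.indicator_of_mem ht, Polynomial.eval_eq_sum_range, Finset.sum_range, Finset.sum_mul]
    simp
  · have hb : (∫ t : ℝ, ‖f t - (Set.Icc ϑ₁ ϑ₂).indicator
        (fun t : ℝ => P.eval (t : ℂ) * Complex.exp (-t)) t‖)
        ≤ ∫ t : ℝ, (Set.Icc ϑ₁ ϑ₂).indicator (fun _ => δ + δ) t := by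
      refine integral_mono_of_nonneg (Filter.Eventually.of_forall fun t => norm_nonneg _) ?_
        (Filter.Eventually.of_forall fun t => ?_)
      · exact (integrable_indicator_iff measurableSet_Icc).2
          (integrableOn_const (by simp))
      · by_cases ht : t ∈ Set.Icc ϑ₁ ϑ₂
        · simp only [Set.indicator_of_mem ht]
          have e : f t - P.eval (t : ℂ) * Complex.exp (-t)
              = (g t - P.eval (t : ℂ)) * Complex.exp (-t) := by
            simp only [g]
            rw [hf t ht, sub_mul, mul_assoc _ (Complex.exp t), ← Complex.exp_add]
            simp
          rw [e, norm_mul]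
          have h1 : ‖Complex.exp (-(t : ℂ))‖ ≤ 1 := by
            rw [Complex.norm_exp]
            simp [hϑ₁.trans ht.1]
          exact (mul_le_of_le_one_right (norm_nonneg _) h1).trans (hnear t ht)
        · simp [Set.indicator_of_notMem ht, hf_supp t ht]
    refine hb.trans (le_of_eq ?_)
    rw [integral_indicator measurableSet_Icc, setIntegral_const]
    simp [Measure.real, hL.le, ← hδε, mul_comm]
end

section
/- Let α > 0 and ϑ > 0. Define ψ₀ : [0, 1] → ℝ by ψ₀(ϱ) = 1 if ϱ ≥ exp(−αϑ) and ψ₀(ϱ) = 0 if ϱ < exp(−αϑ), and for each n ∈ ℕ define θ_{0,n} : ℝ → ℝ by θ_{0,n}(t) = Σ_{k=0}^{n} C(n,k) ψ₀(k/n) exp(−αkt)(1 − exp(−αt))^{n−k} for t ∈ [0, ϑ] and θ_{0,n}(t) = 0 otherwise, where C(n,k) is the binomial coefficient. Then ∫₀^ϑ |1 − θ_{0,n}(t)| dt → 0 as n → ∞; i.e., θ_{0,n} converges in L¹(ℝ) to the kernel θ₀ (the indicator function of [0, ϑ]). -/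
open MeasureTheory intervalIntegral Filter

lemma aux_bern (c : ℝ) (ψ : ℝ → ℝ) (hψ : ∀ r : ℝ, ψ r = if c ≤ r then 1 else 0)
    (n : ℕ) (x : ℝ) (h0 : 0 ≤ x) (h1 : x ≤ 1) :
    |1 - ∑ k ∈ Finset.range (n + 1), (n.choose k : ℝ) * ψ ((k : ℝ) / (n : ℝ)) * x ^ k
      * (1 - x) ^ (n - k)| ≤ 1 ∧
    (n ≠ 0 → c < x → |1 - ∑ k ∈ Finset.range (n + 1), (n.choose k : ℝ) * ψ ((k : ℝ) / (n : ℝ))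
      * x ^ k * (1 - x) ^ (n - k)| ≤ (x * (1 - x) / (x - c) ^ 2) / n) := by
  have hp := bernstein.probability n ⟨x, h0, h1⟩
  have hb : ∀ k : Fin (n + 1), 0 ≤ bernstein n k ⟨x, h0, h1⟩ := fun k => bernstein_nonneg
  have hs : 1 - ∑ k ∈ Finset.range (n + 1), (n.choose k : ℝ) * ψ ((k : ℝ) / (n : ℝ)) * x ^ k
      * (1 - x) ^ (n - k) =
      ∑ k : Fin (n + 1), (1 - ψ ((k : ℝ) / n)) * bernstein n k ⟨x, h0, h1⟩ := by
    rw [Finset.sum_range]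
    simp only [sub_mul, one_mul, Finset.sum_sub_distrib, hp]
    congr 1
    refine Finset.sum_congr rfl fun k _ => ?_
    rw [bernstein_apply]
    ring
  have hψ0 : ∀ r, 0 ≤ 1 - ψ r := by
    intro r; rw [hψ]; split_ifs <;> norm_num
  have hψ1 : ∀ r, 1 - ψ r ≤ 1 := by
    intro r; rw [hψ]; split_ifs <;> norm_num
  rw [hs, abs_of_nonneg (Finset.sum_nonneg fun k _ => mul_nonneg (hψ0 _) (hb k))]
  constructor
  · refine le_trans ?_ hp.le
    exact Finset.sum_le_sum fun k _ => mul_le_of_le_one_left (hb k) (hψ1 _)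
  · intro hn hc
    have hv := bernstein.variance hn ⟨x, h0, h1⟩
    have hd : 0 < (x - c) ^ 2 := by have := sub_pos.2 hc; positivity
    have : (x * (1 - x) / (x - c) ^ 2) / n = (x * (1 - x) / n) / (x - c) ^ 2 := by ring
    rw [this, le_div_iff₀ hd]
    refine le_trans ?_ hv.le
    rw [Finset.sum_mul]
    refine Finset.sum_le_sum fun k _ => ?_
    rw [mul_right_comm]
    refine mul_le_mul_of_nonneg_right ?_ (hb k)
    change _ ≤ (x - (k : ℝ) / n) ^ 2
    rw [hψ]
    split_ifs with h
    · simp; positivity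
    · push Not at h
      have : x - c ≤ x - (k : ℝ) / n := by linarith
      have := sub_pos.2 hc
      simp only [sub_zero, one_mul]
      gcongr

/-- The Bernstein-type approximants `θ_{0,n}` (built from the Bernstein polynomials of the
step function `ψ₀` composed with `ϱ = exp(-αt)`) converge in `L¹` to the indicator
kernel `θ₀` of `[0, ϑ]`. -/
theorem stmt11 (α ϑ : ℝ) (hα : 0 < α) (hϑ : 0 < ϑ)
    (ψ₀ : ℝ → ℝ)
    (hψ₀ : ∀ ϱ : ℝ, ψ₀ ϱ = if Real.exp (-α * ϑ) ≤ ϱ then 1 else 0)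
    (θ : ℕ → ℝ → ℝ)
    (hθ : ∀ (n : ℕ) (t : ℝ), θ n t =
      if t ∈ Set.Icc (0:ℝ) ϑ then
        ∑ k ∈ Finset.range (n + 1),
          (n.choose k : ℝ) * ψ₀ ((k : ℝ) / (n : ℝ)) * Real.exp (-α * k * t)
            * (1 - Real.exp (-α * t)) ^ (n - k)
      else 0) :
    Tendsto (fun n => ∫ t in (0:ℝ)..ϑ, |1 - θ n t|) atTop (nhds 0) := by
  have hm : ∀ n, Measurable (θ n) := by
    intro n
    have : θ n = fun t => _ := funext (hθ n)
    rw [this]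
    refine Measurable.ite measurableSet_Icc (Continuous.measurable ?_) measurable_const
    fun_prop
  have key : ∀ n t, t ∈ Set.Icc (0:ℝ) ϑ → θ n t = ∑ k ∈ Finset.range (n + 1),
      (n.choose k : ℝ) * ψ₀ ((k : ℝ) / (n : ℝ)) * (Real.exp (-α * t)) ^ k
            * (1 - Real.exp (-α * t)) ^ (n - k) := by
    intro n t ht
    rw [hθ, if_pos ht]
    refine Finset.sum_congr rfl fun k _ => ?_
    rw [← Real.exp_nat_mul]
    congr 3
    ring
  have hx1 : ∀ t, 0 ≤ t → Real.exp (-α * t) ≤ 1 := by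
    intro t ht
    rw [Real.exp_le_one_iff]
    nlinarith [mul_nonneg hα.le ht]
  suffices hz : Tendsto (fun n => ∫ t in (0:ℝ)..ϑ, |1 - θ n t|) atTop
      (nhds (∫ t in (0:ℝ)..ϑ, (0:ℝ))) by simpa using hz
  refine intervalIntegral.tendsto_integral_filter_of_dominated_convergence (fun _ => (1:ℝ))
    (Eventually.of_forall fun n => ?_) (Eventually.of_forall fun n => ?_) (intervalIntegrable_const (μ := volume)) ?_
  · exact (measurable_const.sub (hm n)).abs.aestronglyMeasurable
  · refine Eventually.of_forall fun t ht => ?_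
    rw [Set.uIoc_of_le hϑ.le] at ht
    rw [Real.norm_eq_abs, abs_abs, key n t ⟨ht.1.le, ht.2⟩]
    exact (aux_bern _ ψ₀ hψ₀ n _ (Real.exp_pos _).le (hx1 t ht.1.le)).1
  · have hne : ∀ᵐ t : ℝ, t ≠ ϑ := by simp [ae_iff]
    filter_upwards [hne] with t hne ht
    rw [Set.uIoc_of_le hϑ.le] at ht
    have hlt : t < ϑ := lt_of_le_of_ne ht.2 hne
    have hc : Real.exp (-α * ϑ) < Real.exp (-α * t) := by
      rw [Real.exp_lt_exp]; nlinarith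
    refine squeeze_zero' (Eventually.of_forall fun n => abs_nonneg _) ?_
      (tendsto_const_div_atTop_nhds_zero_nat
        (Real.exp (-α * t) * (1 - Real.exp (-α * t)) / (Real.exp (-α * t) - Real.exp (-α * ϑ)) ^ 2))
    filter_upwards [eventually_ne_atTop 0] with n hn
    rw [key n t ⟨ht.1.le, ht.2⟩]
    exact (aux_bern _ ψ₀ hψ₀ n _ (Real.exp_pos _).le (hx1 t ht.1.le)).2 hn hc
end

section
/- Let α > 0, ϑ > 0 and λ ∈ ℂ. Define Φ_λ : [0, 1] → ℂ by Φ_λ(μ) = exp(λ · (−α^{-1} ln((1 − exp(−αϑ))μ + exp(−αϑ)))), and for each n ∈ ℕ define θ_{λ,n} : [0, ϑ] → ℂ by θ_{λ,n}(t) = (1 − exp(−αϑ))^{−n} Σ_{k=0}^{n} C(n,k) Φ_λ(k/n) (exp(−αt) − exp(−αϑ))^k (1 − exp(−αt))^{n−k}, where C(n,k) is the binomial coefficient. Then θ_{λ,n} converges uniformly on [0, ϑ] to t ↦ exp(λ t), i.e., sup_{t ∈ [0,ϑ]} |exp(λ t) − θ_{λ,n}(t)| → 0 as n → ∞. -/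
open Complex Filter

/-- The Bernstein approximants `θ_{λ,n}` of `Φ_λ`, evaluated at
`μ(t) = (exp(-αt) - exp(-αϑ))/(1 - exp(-αϑ))`, converge uniformly on `[0, ϑ]` to the
elementary distributed-delay kernel `t ↦ exp(λ t)`. -/
theorem stmt12 (α ϑ : ℝ) (hα : 0 < α) (hϑ : 0 < ϑ) (lam : ℂ)
    (Φ : ℝ → ℂ)
    (hΦ : ∀ μ : ℝ, Φ μ = Complex.exp (lam *
      ((-α⁻¹ * Real.log ((1 - Real.exp (-α * ϑ)) * μ + Real.exp (-α * ϑ)) : ℝ) : ℂ)))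
    (θ : ℕ → ℝ → ℂ)
    (hθ : ∀ (n : ℕ) (t : ℝ), θ n t =
      (((1 - Real.exp (-α * ϑ)) ^ n : ℝ) : ℂ)⁻¹ *
        ∑ k ∈ Finset.range (n + 1),
          (n.choose k : ℂ) * Φ ((k : ℝ) / (n : ℝ))
            * (((Real.exp (-α * t) - Real.exp (-α * ϑ) : ℝ) : ℂ)) ^ k
            * (((1 - Real.exp (-α * t) : ℝ) : ℂ)) ^ (n - k)) :
    TendstoUniformlyOn (fun n t => θ n t) (fun t => Complex.exp (lam * t)) atTop
      (Set.Icc (0:ℝ) ϑ) := by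
  have he0 : 0 < Real.exp (-α * ϑ) := Real.exp_pos _
  have he1 : Real.exp (-α * ϑ) < 1 := by
    rw [Real.exp_lt_one_iff]; nlinarith [mul_pos hα hϑ]
  set e := Real.exp (-α * ϑ) with he
  have hd : 0 < 1 - e := by linarith
  have hcont : Continuous (fun x : unitInterval => Φ (x : ℝ)) := by
    have h1 : Continuous (fun x : unitInterval => Real.log ((1 - e) * (x : ℝ) + e)) := by
      apply Continuous.log (by fun_prop)
      intro x
      have := mul_nonneg hd.le x.2.1
      positivity
    simp only [hΦ]
    fun_prop
  let f : C(unitInterval, ℂ) := ⟨fun x => Φ (x : ℝ), hcont⟩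
  have key := bernsteinApproximation_uniform f
  rw [ContinuousMap.tendsto_iff_tendstoUniformly, Metric.tendstoUniformly_iff] at key
  rw [Metric.tendstoUniformlyOn_iff]
  intro ε hε
  filter_upwards [key ε hε] with n hn t ht
  have ht1 : Real.exp (-α * t) ≤ 1 := by
    rw [Real.exp_le_one_iff]; nlinarith [mul_nonneg hα.le ht.1]
  have ht2 : e ≤ Real.exp (-α * t) := by
    rw [he, Real.exp_le_exp]; nlinarith [mul_le_mul_of_nonneg_left ht.2 hα.le]
  let x : unitInterval := ⟨(Real.exp (-α * t) - e) / (1 - e),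
    div_nonneg (by linarith) hd.le, (div_le_one hd).2 (by linarith)⟩
  have h1 : f x = Complex.exp (lam * t) := by
    change Φ ((Real.exp (-α * t) - e) / (1 - e)) = _
    rw [hΦ, mul_div_cancel₀ _ hd.ne', sub_add_cancel, Real.log_exp]
    congr 3
    field_simp
  have h2 : bernsteinApproximation n f x = θ n t := by
    rw [bernsteinApproximation.apply, hθ, Finset.sum_range, Finset.mul_sum]
    refine Finset.sum_congr rfl fun k _ => ?_
    change _ • Φ ((k : ℝ) / n) = _
    have hx : (x : ℝ) = (Real.exp (-α * t) - e) / (1 - e) := rfl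
    have hx' : 1 - (x : ℝ) = (1 - Real.exp (-α * t)) / (1 - e) := by
      rw [hx]; field_simp; ring
    have hr : bernstein n k x = ((1 - e) ^ n)⁻¹ * ((n.choose k : ℝ) *
        (Real.exp (-α * t) - e) ^ (k : ℕ) * (1 - Real.exp (-α * t)) ^ (n - (k : ℕ))) := by
      rw [bernstein_apply, hx', hx, div_pow, div_pow]
      have hp : (1 - e) ^ n = (1 - e) ^ (k : ℕ) * (1 - e) ^ (n - (k : ℕ)) := by
        rw [← pow_add, Nat.add_sub_cancel' k.is_le]
      rw [hp]
      field_simp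
    rw [hr, Complex.real_smul]
    push_cast
    ring
  have := hn x
  rwa [h1, h2] at this
end

section
/- Let A be a commutative unital Banach algebra (complete normed ring with submultiplicative norm and ‖1‖ = 1). Let n, d, n_c, d_c ∈ A satisfy the Bézout identity n · n_c + d · d_c = 1, and let n_c', d_c' ∈ A with ‖n_c − n_c'‖ ≤ ε_n and ‖d_c − d_c'‖ ≤ ε_d for nonnegative reals ε_n, ε_d. If max(ε_n, ε_d) · (‖n‖ + ‖d‖) < 1, then n · n_c' + d · d_c' is invertible in A. (Applied to the convolution algebra of BIBO-stable systems, this says the approximated compensator with factorization (n_c', d_c') still stabilizes the plant with coprime factorization (n, d).) -/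
/-- Robust stabilization in a commutative unital Banach algebra: if `n·n_c + d·d_c = 1`
and `(n_c', d_c')` approximate `(n_c, d_c)` with `max(ε_n, ε_d)·(‖n‖ + ‖d‖) < 1`, then
`n·n_c' + d·d_c'` is a unit, i.e. the approximated compensator still stabilizes the plant. -/
theorem stmt14 {A : Type*} [NormedCommRing A] [NormOneClass A] [CompleteSpace A]
    (n d nc dc nc' dc' : A) (εn εd : ℝ) (hεn : 0 ≤ εn) (hεd : 0 ≤ εd)
    (hbez : n * nc + d * dc = 1)
    (hn : ‖nc - nc'‖ ≤ εn) (hd : ‖dc - dc'‖ ≤ εd)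
    (hsmall : max εn εd * (‖n‖ + ‖d‖) < 1) :
    IsUnit (n * nc' + d * dc') := by
  have key : ‖n * (nc - nc') + d * (dc - dc')‖ < 1 := by
    have h1 : ‖n * (nc - nc')‖ ≤ ‖n‖ * max εn εd :=
      (norm_mul_le _ _).trans
        (mul_le_mul_of_nonneg_left (hn.trans (le_max_left _ _)) (norm_nonneg _))
    have h2 : ‖d * (dc - dc')‖ ≤ ‖d‖ * max εn εd :=
      (norm_mul_le _ _).trans
        (mul_le_mul_of_nonneg_left (hd.trans (le_max_right _ _)) (norm_nonneg _))
    have h3 := norm_add_le (n * (nc - nc')) (d * (dc - dc'))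
    linarith
  have h := isUnit_one_sub_of_norm_lt_one key
  have e : 1 - (n * (nc - nc') + d * (dc - dc')) = n * nc' + d * dc' := by
    rw [← hbez]; ring
  rwa [e] at h
end

section
/- Let a > 0, λ ∈ ℂ, ϑ > 0 and ε > 0. Then there exist n ∈ ℕ, n ≥ 1, and coefficients γ₀, …, γ_n ∈ ℂ such that ∫₀^∞ | θ_λ(t) − Σ_{i=0}^{n} γ_i exp(−a(t − i ϑ/n)) · 1_{[i ϑ/n, ∞)}(t) | dt ≤ ε, where 1_{[c,∞)} denotes the indicator function of [c, ∞). That is, the elementary distributed-delay kernel can be approximated in L¹-norm by a finite sum of time-shifted first-order low-pass (decaying exponential) responses, which corresponds in the Laplace domain to an approximation of the form (s + a)^{-1} Σ_i γ_i exp(−s t_i) with lumped delays t_i = i ϑ/n. -/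
open Complex MeasureTheory

lemma tele_aux (G : ℕ → ℂ) (k : ℕ) :
    ∑ i ∈ Finset.range (k + 1), (if i = 0 then G 0 else G i - G (i - 1)) = G k := by
  induction k with
  | zero => simp
  | succ k ih => rw [Finset.sum_range_succ, ih]; simp

lemma sum_aux (G : ℕ → ℂ) (a t : ℝ) (s : ℕ → ℝ) (n k : ℕ) (hk : k ≤ n)
    (hs : ∀ i ≤ n, (s i ≤ t ↔ i ≤ k)) :
    ∑ i ∈ Finset.range (n + 1),
      ((if i = 0 then G 0 else G i - G (i - 1)) * Complex.exp (-(a : ℂ) * (s i : ℝ)))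
        * Complex.exp (-(a : ℂ) * ((t : ℂ) - (s i : ℝ))) * (if s i ≤ t then 1 else 0)
      = G k * Complex.exp (-(a : ℂ) * t) := by
  rw [← tele_aux G k, Finset.sum_mul]
  have hsub : Finset.range (k + 1) ⊆ Finset.range (n + 1) := by
    intro i; simp only [Finset.mem_range]; omega
  rw [← Finset.sum_subset hsub]
  · refine Finset.sum_congr rfl fun i hi => ?_
    have hi' : i ≤ k := by simp only [Finset.mem_range] at hi; omega
    rw [if_pos ((hs i (hi'.trans hk)).2 hi'), mul_one, mul_assoc, ← Complex.exp_add]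
    congr 2; ring
  · intro i hi hik
    simp only [Finset.mem_range] at hi hik
    have hn : ¬ s i ≤ t := by
      rw [hs i (by omega)]; omega
    rw [if_neg hn, mul_zero]

/-- The elementary distributed-delay kernel `θ_λ` can be approximated in `L¹`-norm by a
finite sum of time-shifted first-order low-pass responses
`t ↦ γᵢ exp(-a(t - iϑ/n))·1_{[iϑ/n,∞)}(t)` (Laplace domain:
`(s+a)⁻¹ Σ γᵢ exp(-s·iϑ/n)`). -/
theorem stmt15 (a : ℝ) (ha : 0 < a) (lam : ℂ) (ϑ : ℝ) (hϑ : 0 < ϑ)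
    (ε : ℝ) (hε : 0 < ε) :
    ∃ (n : ℕ), 1 ≤ n ∧ ∃ γ : ℕ → ℂ,
      (∫ t in Set.Ioi (0:ℝ),
        ‖(if t ∈ Set.Icc (0:ℝ) ϑ then Complex.exp (lam * t) else 0)
          - ∑ i ∈ Finset.range (n + 1),
              γ i * Complex.exp (-(a : ℂ) * ((t : ℂ) - ((i : ℝ) * ϑ / n : ℝ)))
                * (if ((i : ℝ) * ϑ / n : ℝ) ≤ t then 1 else 0)‖) ≤ ε := by
  have huc : UniformContinuousOn (fun t : ℝ => Complex.exp ((lam + a) * t)) (Set.Icc 0 ϑ) :=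
    isCompact_Icc.uniformContinuousOn_of_continuous (by fun_prop)
  obtain ⟨δ, hδ, hd⟩ := Metric.uniformContinuousOn_iff.1 huc (ε / ϑ) (by positivity)
  obtain ⟨m, hm⟩ := exists_nat_gt (ϑ / δ)
  have hm0 : (0:ℝ) < m := lt_trans (by positivity) hm
  have hm1 : 1 ≤ m := by exact_mod_cast hm0
  have hmd : ϑ / m < δ := by
    rw [div_lt_iff₀ hδ] at hm
    rw [div_lt_iff₀ hm0]; linarith
  set G : ℕ → ℂ := fun k => if k < m then
    Complex.exp ((lam + a) * ((k : ℝ) * ϑ / m : ℝ)) else 0 with hG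
  refine ⟨m, hm1, fun i => (if i = 0 then G 0 else G i - G (i - 1)) *
    Complex.exp (-(a : ℂ) * (((i : ℝ) * ϑ / m : ℝ) : ℂ)), ?_⟩
  have hint : IntegrableOn ((Set.Ioc (0:ℝ) ϑ).indicator (fun _ => ε / ϑ)) (Set.Ioi (0:ℝ)) := by
    apply Integrable.integrableOn
    rw [integrable_indicator_iff measurableSet_Ioc]
    exact integrableOn_const (by simp)
  have hval : ∫ t in Set.Ioi (0:ℝ), (Set.Ioc (0:ℝ) ϑ).indicator (fun _ => ε / ϑ) t = ε := by
    rw [setIntegral_indicator measurableSet_Ioc,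
      Set.inter_eq_right.2 Set.Ioc_subset_Ioi_self, setIntegral_const]
    simp [hϑ.le]
    field_simp
  refine le_trans (integral_mono_of_nonneg (Filter.Eventually.of_forall fun t => norm_nonneg _)
    hint ?_) hval.le
  have hne : ∀ᵐ t ∂(volume.restrict (Set.Ioi (0:ℝ))), t ≠ ϑ :=
    ae_restrict_of_ae (Measure.ae_ne volume ϑ)
  filter_upwards [hne, ae_restrict_mem measurableSet_Ioi] with t htne ht0
  replace ht0 : 0 < t := ht0
  rcases lt_or_gt_of_ne htne with hlt | hgt
  · have hq : 0 ≤ t * m / ϑ := by positivity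
    set k := ⌊t * m / ϑ⌋₊ with hk
    have hs : ∀ i : ℕ, ((i:ℝ) * ϑ / m ≤ t ↔ i ≤ k) := by
      intro i
      rw [hk, Nat.le_floor_iff hq, div_le_iff₀ hm0, le_div_iff₀ hϑ]
    have hkm : k < m := by
      rw [hk, Nat.floor_lt hq, div_lt_iff₀ hϑ]; nlinarith
    have h1 : (k:ℝ) * ϑ / m ≤ t := (hs k).2 le_rfl
    have h2 : t < (k:ℝ) * ϑ / m + ϑ / m := by
      have := (hs (k+1)).not.2 (by omega)
      push_cast at this
      have e : ((k:ℝ) + 1) * ϑ / m = (k:ℝ) * ϑ / m + ϑ / m := by ring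
      linarith
    have h0 : 0 ≤ (k:ℝ) * ϑ / m := by positivity
    rw [sum_aux G a t (fun i => (i:ℝ) * ϑ / m) m k hkm.le (fun i _ => hs i),
      if_pos ⟨ht0.le, hlt.le⟩, Set.indicator_of_mem (show t ∈ Set.Ioc 0 ϑ from ⟨ht0, hlt.le⟩)]
    have hGk : G k = Complex.exp ((lam + a) * ((k : ℝ) * ϑ / m : ℝ)) := by simp only [hG, if_pos hkm]
    have hE : Complex.exp (lam * t) = Complex.exp ((lam + a) * t) * Complex.exp (-(a:ℂ) * t) := by
      rw [← Complex.exp_add]; congr 1; ring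
    rw [hE, ← sub_mul, norm_mul, hGk]
    have hb := hd t ⟨ht0.le, hlt.le⟩ ((k:ℝ) * ϑ / m) ⟨h0, by linarith⟩
      (by rw [Real.dist_eq, abs_of_nonneg] <;> linarith)
    rw [dist_eq_norm] at hb
    have hn : ‖Complex.exp (-(a:ℂ) * t)‖ ≤ 1 := by
      rw [Complex.norm_exp]
      apply Real.exp_le_one_iff.2
      simp
      positivity
    calc _ ≤ ε / ϑ * 1 := mul_le_mul hb.le hn (norm_nonneg _) (by positivity)
      _ = _ := mul_one _
  · rw [sum_aux G a t (fun i => (i:ℝ) * ϑ / m) m m le_rfl,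
      if_neg (fun h => absurd h.2 (not_le.2 hgt)),
      Set.indicator_of_notMem (fun h => absurd h.2 (not_le.2 hgt))]
    · simp [hG]
    · intro i hi
      refine ⟨fun _ => hi, fun _ => ?_⟩
      have : (i:ℝ) ≤ m := by exact_mod_cast hi
      rw [div_le_iff₀ hm0]
      nlinarith
end
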